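/- arXiv:1509.06771 — 2 statements merged into one kernel-verified Lean document; each statement's English description precedes it below -/
import Mathlib

section
/- Let n ≥ 3 and let G be a finite subgroup of SO(n) generated by elements each of which fixes some point of the unit sphere S^{n−1} (i.e. each generator has a nonzero fixed vector in ℝⁿ). Then the orbit space S^{n−1}/G, equipped with the quotient topology, is simply connected. -/
open Metric

noncomputable section

/-- Euclidean `n`-space. -/
abbrev Euc (n : ℕ) := EuclideanSpace ℝ (Fin n)

/-- The orthogonal group `O(n)`, realized as the group of linear isometric
self-equivalences of Euclidean `n`-space. -/
abbrev Orth (n : ℕ) := Euc n ≃ₗᵢ[ℝ] Euc n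

instance {n : ℕ} : MulAction (Orth n) (Euc n) where
  smul g x := g x
  one_smul _ := rfl
  mul_smul _ _ _ := rfl

instance {n : ℕ} : MulAction (Orth n) (sphere (0 : Euc n) 1) where
  smul g x := ⟨g x, by
    have hx := x.2
    simp only [mem_sphere_iff_norm, sub_zero] at hx ⊢
    rw [g.norm_map]; exact hx⟩
  one_smul x := Subtype.ext rfl
  mul_smul _ _ _ := Subtype.ext rfl

/-- The fixed-point subspace `{v : gv = v}` of an orthogonal transformation. -/
def fixedSubspace {n : ℕ} (g : Orth n) : Submodule ℝ (Euc n) :=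
  LinearMap.ker ((g.toLinearEquiv : Euc n →ₗ[ℝ] Euc n) - LinearMap.id)

/-- A reflection: an orthogonal transformation whose fixed-point subspace has
dimension `n - 1` (codimension one). -/
def IsReflection {n : ℕ} (g : Orth n) : Prop :=
  Module.finrank ℝ (fixedSubspace g) + 1 = n

/-- A rotation: an orthogonal transformation whose fixed-point subspace has
dimension `n - 2` (codimension two). -/
def IsRotation {n : ℕ} (g : Orth n) : Prop :=
  Module.finrank ℝ (fixedSubspace g) + 2 = n


theorem path_induction {Y : Type*} [TopologicalSpace Y]
    (P : ∀ ⦃a b : Y⦄, Path a b → Prop)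
    (hh : ∀ ⦃a b : Y⦄ (p p' : Path a b), p.Homotopic p' → P p → P p')
    (ht : ∀ ⦃a b c : Y⦄ (p : Path a b) (p' : Path b c), P p → P p' → P (p.trans p'))
    (hl : ∀ y : Y, ∃ V : Set Y, IsOpen V ∧ y ∈ V ∧
      ∀ ⦃a b : Y⦄ (p : Path a b), (∀ t, p t ∈ V) → P p)
    {a b : Y} (p : Path a b) : P p := by
  choose V hVo hyV hV using hl
  obtain ⟨t, ht0, hmono, ⟨N, hN⟩, hcov⟩ :=
    exists_monotone_Icc_subset_open_cover_unitInterval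
      (c := fun y : Y => p ⁻¹' V y) (fun y => (hVo y).preimage p.continuous)
      (fun s _ => Set.mem_iUnion.2 ⟨p s, hyV _⟩)
  have key : ∀ n, P (p.subpath 0 (t n)) := by
    intro n
    induction n with
    | zero =>
      apply hV (p 0)
      intro s
      rw [ht0, Path.subpath_self]
      exact hyV _
    | succ n ih =>
      refine hh _ _ ⟨Path.Homotopy.subpathTransSubpath p 0 (t n) (t (n+1))⟩ (ht _ _ ih ?_)
      obtain ⟨y, hy⟩ := hcov n
      apply hV y
      intro s
      have : p.subpath (t n) (t (n+1)) s ∈ Set.range (p.subpath (t n) (t (n+1))) := ⟨s, rfl⟩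
      rw [Path.range_subpath_of_le _ _ _ (hmono (Nat.le_succ n))] at this
      obtain ⟨r, hr, hr'⟩ := this
      rw [← hr']
      exact hy hr
  have h1 := key N
  rw [hN N le_rfl, Path.subpath_zero_one] at h1
  have hc : ∀ (a' b' : Y) (h1 : a' = a) (h2 : b' = b), P (p.cast h1 h2) → P p := by
    rintro a' b' rfl rfl h; exact h
  exact hc _ _ _ _ h1

/-- Two paths with values in a simply connected subset are homotopic. -/
theorem homotopic_of_mem {X Y : Type*} [TopologicalSpace X] [TopologicalSpace Y] {C : Set X}
    (hC : IsSimplyConnected C) (r : C(C, Y)) (i : C(Y, X))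
    {a b : Y} (p p' : Path a b) (hp : ∀ t, i (p t) ∈ C) (hp' : ∀ t, i (p' t) ∈ C)
    (hr : ∀ y (h : i y ∈ C), r ⟨i y, h⟩ = y) : p.Homotopic p' := by
  have := hC.simplyConnectedSpace
  have ha : i a ∈ C := by simpa using hp 0
  have hb : i b ∈ C := by simpa using hp 1
  let q : Path (⟨i a, ha⟩ : C) ⟨i b, hb⟩ :=
    { toFun := fun t => ⟨i (p t), hp t⟩
      continuous_toFun := by fun_prop
      source' := by simp
      target' := by simp }
  let q' : Path (⟨i a, ha⟩ : C) ⟨i b, hb⟩ :=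
    { toFun := fun t => ⟨i (p' t), hp' t⟩
      continuous_toFun := by fun_prop
      source' := by simp
      target' := by simp }
  have h := ((SimplyConnectedSpace.paths_homotopic q q').map r).pathCast
    (hr a ha).symm (hr b hb).symm
  convert h using 1
  · ext t; simp [q, hr]
  · ext t; simp [q', hr]

section sphere
variable {E : Type*} [NormedAddCommGroup E] [InnerProductSpace ℝ E]

/-- radial retraction -/
noncomputable def radial (C : Set E) (h0 : (0 : E) ∉ C) : C(C, sphere (0 : E) 1) where
  toFun v := ⟨‖(v : E)‖⁻¹ • (v : E), by
    have : (v : E) ≠ 0 := fun h => h0 (h ▸ v.2)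
    simp [norm_smul, this]⟩
  continuous_toFun := by
    refine Continuous.subtype_mk ?_ _
    refine Continuous.smul (Continuous.inv₀ (by fun_prop) ?_) (by fun_prop)
    intro v h
    exact h0 (norm_eq_zero.1 h ▸ v.2)

theorem sphere_homotopic_of_mem {C : Set E} (h0 : (0 : E) ∉ C)
    (hC : IsSimplyConnected C) {a b : sphere (0 : E) 1} (p p' : Path a b)
    (hp : ∀ t, (p t : E) ∈ C) (hp' : ∀ t, (p' t : E) ∈ C) : p.Homotopic p' := by
  refine homotopic_of_mem hC (radial C h0) ⟨Subtype.val, continuous_subtype_val⟩ p p' hp hp' ?_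
  intro y h
  ext1
  simp [radial]

theorem sphere_homotopic_of_avoid (v : E) (hv : v ≠ 0) {a b : sphere (0 : E) 1} (p p' : Path a b)
    (hp : ∀ t, ¬ ∃ c : ℝ, 0 ≤ c ∧ (p t : E) = c • v)
    (hp' : ∀ t, ¬ ∃ c : ℝ, 0 ≤ c ∧ (p' t : E) = c • v) : p.Homotopic p' := by
  have hs : StarConvex ℝ (-v) {w : E | ¬ ∃ c : ℝ, 0 ≤ c ∧ w = c • v} := by
    intro w hw α β hα hβ hαβ
    rintro ⟨c, hc, h⟩
    rcases hβ.eq_or_lt with rfl | hβ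
    · have : (α + c) • v = 0 := by
        rw [add_smul, ← h]; simp
      rcases smul_eq_zero.1 this with h | h
      · linarith
      · exact hv h
    · refine hw ⟨(c + α) / β, by positivity, ?_⟩
      have : β • w = (c + α) • v := by
        rw [add_smul, ← h]; simp
      rw [div_eq_inv_mul, mul_smul, ← this, smul_smul, inv_mul_cancel₀ hβ.ne', one_smul]
  have hne : (-v) ∈ {w : E | ¬ ∃ c : ℝ, 0 ≤ c ∧ w = c • v} := by
    rintro ⟨c, hc, h⟩
    have : (1 + c) • v = 0 := by rw [add_smul, ← h]; simp
    rcases smul_eq_zero.1 this with h | h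
    · linarith
    · exact hv h
  have := hs.contractibleSpace ⟨_, hne⟩
  refine sphere_homotopic_of_mem (C := {w : E | ¬ ∃ c : ℝ, 0 ≤ c ∧ w = c • v}) ?_
    (SimplyConnectedSpace.ofContractible _) p p' hp hp'
  intro h
  exact h ⟨0, le_rfl, by simp⟩

/-- the normalized segment path within an open half space -/
theorem exists_segment_path {C : Set E} (hC : Convex ℝ C) (h0 : (0 : E) ∉ C)
    (hcone : ∀ c : ℝ, 0 < c → ∀ v ∈ C, c • v ∈ C)
    (a b : sphere (0 : E) 1) (ha : (a : E) ∈ C) (hb : (b : E) ∈ C) :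
    ∃ p : Path a b, (∀ t, (p t : E) ∈ C) ∧ ∀ t, (p t : E) ∈ Submodule.span ℝ {(a : E), (b : E)} := by
  have hmem : ∀ t : unitInterval, (1 - t : ℝ) • (a : E) + (t : ℝ) • (b : E) ∈ C := fun t =>
    hC ha hb (by linarith [t.2.2]) t.2.1 (by ring)
  let f : C(unitInterval, C) := ⟨fun t => ⟨_, hmem t⟩, by fun_prop⟩
  refine ⟨⟨(radial C h0).comp f, ?_, ?_⟩, ?_, ?_⟩
  · ext1; simp [radial, f]
  · ext1; simp [radial, f]
  · intro t
    apply hcone _ _ _ (hmem t)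
    simp only [inv_pos, norm_pos_iff]
    intro h
    exact h0 (h ▸ hmem t)
  · intro t
    apply Submodule.smul_mem
    apply Submodule.add_mem
    · exact Submodule.smul_mem _ _ (Submodule.subset_span (by simp))
    · exact Submodule.smul_mem _ _ (Submodule.subset_span (by simp))

theorem sphere_simplyConnected [FiniteDimensional ℝ E] (h3 : 2 < Module.finrank ℝ E) :
    SimplyConnectedSpace (sphere (0 : E) 1) := by
  rw [simply_connected_iff_loops_nullhomotopic]
  constructor
  · rw [← isPathConnected_iff_pathConnectedSpace]
    apply isPathConnected_sphere _ _ zero_le_one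
    rw [← Module.finrank_eq_rank]
    exact_mod_cast (by omega : 1 < Module.finrank ℝ E)
  intro x γ
  have key := path_induction (Y := sphere (0 : E) 1) (fun a b p =>
    ∃ p' : Path a b, p.Homotopic p' ∧ ∃ s : Finset (Submodule ℝ E), ⊤ ∉ s ∧
      ∀ t, ∃ W ∈ s, (p' t : E) ∈ W) ?_ ?_ ?_ γ
  · obtain ⟨p', hp, s, hs, hps⟩ := key
    have := Subspace.biUnion_ne_univ_of_top_notMem hs
    rw [Set.ne_univ_iff_exists_notMem] at this
    obtain ⟨v, hv⟩ := this
    simp only [Set.mem_iUnion, not_exists, SetLike.mem_coe] at hv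
    have hn : ∀ t, ¬ ∃ c : ℝ, 0 ≤ c ∧ (p' t : E) = c • v := by
      rintro t ⟨c, hc, h⟩
      obtain ⟨W, hW, hm⟩ := hps t
      apply hv W hW
      have hc : c ≠ 0 := by
        rintro rfl
        have := (p' t).2
        rw [h] at this
        simp at this
      rw [h] at hm
      exact (Submodule.smul_mem_iff _ hc).1 hm
    refine hp.trans (sphere_homotopic_of_avoid v ?_ _ _ hn ?_)
    · rintro rfl
      obtain ⟨W, hW, hm⟩ := hps 0
      exact hv W hW W.zero_mem
    · intro t; simpa using hn 0
  · rintro a b p p' hpp ⟨q, hq, h⟩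
    exact ⟨q, hpp.symm.trans hq, h⟩
  · classical
    rintro a b c p p' ⟨q, hq, s, hs, h⟩ ⟨q', hq', s', hs', h'⟩
    refine ⟨q.trans q', hq.hcomp hq', s ∪ s', by simp [hs, hs'], ?_⟩
    intro t
    have : q.trans q' t ∈ Set.range (q.trans q') := ⟨t, rfl⟩
    rw [Path.trans_range] at this
    rcases this with ⟨r, hr⟩ | ⟨r, hr⟩
    · obtain ⟨W, hW, hm⟩ := h r
      exact ⟨W, by simp [hW], hr ▸ hm⟩
    · obtain ⟨W, hW, hm⟩ := h' r
      exact ⟨W, by simp [hW], hr ▸ hm⟩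
  · intro y
    have h0 : (0 : E) ∉ {w : E | 0 < inner ℝ (y : E) w} := by simp
    have hconv : Convex ℝ {w : E | 0 < inner ℝ (y : E) w} := by
      intro v hv w hw α β hα hβ hαβ
      simp only [Set.mem_ofPred_eq, inner_add_right, inner_smul_right] at *
      rcases hα.eq_or_lt with rfl | hα
      · simp at hαβ; subst hαβ; simpa using hw
      · positivity
    have hy : (y : E) ∈ {w : E | 0 < inner ℝ (y : E) w} := by
      simp
    refine ⟨{w | 0 < inner ℝ (y : E) w}, ?_, hy, ?_⟩
    · exact isOpen_lt continuous_const (by fun_prop)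
    intro a b p hp
    obtain ⟨p', hp1, hp2⟩ := exists_segment_path hconv h0 (by
        intro c hc v hv
        simp only [Set.mem_ofPred_eq, inner_smul_right] at *
        positivity) a b (by simpa using hp 0) (by simpa using hp 1)
    have := hconv.contractibleSpace ⟨_, hy⟩
    refine ⟨p', sphere_homotopic_of_mem h0 (SimplyConnectedSpace.ofContractible _) _ _ hp hp1,
      {Submodule.span ℝ {(a : E), (b : E)}}, ?_, ?_⟩
    · simp only [Finset.mem_singleton]
      intro h
      classical
      have h1 := finrank_span_finset_le_card (R := ℝ) ({(a : E), (b : E)} : Finset E)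
      rw [Finset.coe_pair] at h1
      rw [Set.finrank, ← h, finrank_top] at h1
      have h2 : ({(a : E), (b : E)} : Finset E).card ≤ 2 := Finset.card_le_two
      omega
    · intro t
      exact ⟨_, by simp, hp2 t⟩

end sphere
section quotient
set_option linter.unusedSectionVars false
variable {G X : Type*} [Group G] [TopologicalSpace X] [MulAction G X] [ContinuousConstSMul G X]

/-- The orbit space. -/
abbrev OrbSp (G X : Type*) [Group G] [MulAction G X] := Quotient (MulAction.orbitRel G X)

/-- The quotient map. -/
def orbMk (G : Type*) {X : Type*} [Group G] [TopologicalSpace X] [MulAction G X] :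
    C(X, OrbSp G X) := ⟨fun x => Quotient.mk _ x, continuous_quotient_mk'⟩

theorem orbMk_smul (g : G) (x : X) : orbMk G (g • x) = orbMk G x :=
  Quotient.sound ⟨g, rfl⟩

theorem orbMk_eq {x y : X} (h : orbMk G x = orbMk G y) : ∃ g : G, g • y = x :=
  Quotient.exact h

theorem orbMk_open : IsOpenMap (orbMk G : X → OrbSp G X) :=
  isOpenMap_quotient_mk'_mul (Γ := G) (T := X)

/-- translate of a path -/
def gpath (g : G) {x y : X} (p : Path x y) : Path (g • x) (g • y) :=
  p.map (f := fun z => g • z) (continuous_const_smul g)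

/-- image of a path in the quotient, with adjusted end points -/
def qpath (G : Type*) [Group G] [MulAction G X] {x y : X} (p : Path x y) {a b : OrbSp G X} (ha : a = orbMk G x)
    (hb : b = orbMk G y) : Path a b :=
  (p.map (orbMk G).continuous).cast ha hb

theorem qpath_homotopic {x y : X} {p p' : Path x y} (h : p.Homotopic p') {a b : OrbSp G X}
    (ha : a = orbMk G x) (hb : b = orbMk G y) : (qpath G p ha hb).Homotopic (qpath G p' ha hb) :=
  (h.map (orbMk G)).pathCast ha hb

theorem qpath_trans {x y z : X} (p : Path x y) (p' : Path y z) {a b c : OrbSp G X}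
    (ha : a = orbMk G x) (hb : b = orbMk G y) (hc : c = orbMk G z) :
    qpath G (p.trans p') ha hc = (qpath G p ha hb).trans (qpath G p' hb hc) := by
  subst ha hb hc
  exact Path.map_trans p p' (orbMk G).continuous

theorem qpath_symm {x y : X} (p : Path x y) {a b : OrbSp G X}
    (ha : a = orbMk G x) (hb : b = orbMk G y) :
    qpath G p.symm hb ha = (qpath G p ha hb).symm := by
  subst ha hb
  rfl

theorem qpath_cast {x y x' y' : X} (p : Path x y) (hx : x' = x) (hy : y' = y) {a b : OrbSp G X}
    (ha : a = orbMk G x') (hb : b = orbMk G y') :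
    qpath G (p.cast hx hy) ha hb = qpath G p (ha.trans (by rw [hx])) (hb.trans (by rw [hy])) := by
  subst hx hy
  rfl

theorem qpath_gpath (g : G) {x y : X} (p : Path x y) {a b : OrbSp G X}
    (ha : a = orbMk G (g • x)) (hb : b = orbMk G (g • y)) :
    qpath G (gpath g p) ha hb =
      qpath G p (ha.trans (orbMk_smul g x)) (hb.trans (orbMk_smul g y)) := by
  ext t
  exact orbMk_smul g (p t)

/-- Every path in the quotient is homotopic to one that lifts. -/
theorem exists_lift_up_to_homotopy
    (hloc : ∀ x : X, ∃ U : Set X, IsOpen U ∧ x ∈ U ∧ IsPathConnected U ∧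
      IsSimplyConnected (orbMk G '' U))
    {a b : OrbSp G X} (p : Path a b) :
    ∀ x, ∀ hx : a = orbMk G x, ∃ y, ∃ hy : b = orbMk G y, ∃ γ : Path x y,
      p.Homotopic (qpath G γ hx hy) := by
  refine path_induction (Y := OrbSp G X) (fun a b p => ∀ x, ∀ hx : a = orbMk G x, ∃ y,
    ∃ hy : b = orbMk G y, ∃ γ : Path x y, p.Homotopic (qpath G γ hx hy)) ?_ ?_ ?_ p
  · intro a b p p' hpp h x hx
    obtain ⟨y, hy, γ, h⟩ := h x hx
    exact ⟨y, hy, γ, hpp.symm.trans h⟩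
  · intro a b c p p' h h' x hx
    obtain ⟨y, hy, γ, h⟩ := h x hx
    obtain ⟨z, hz, γ', h'⟩ := h' y hy
    refine ⟨z, hz, γ.trans γ', ?_⟩
    rw [qpath_trans _ _ hx hy hz]
    exact h.hcomp h'
  · intro y
    obtain ⟨x₀, rfl⟩ : ∃ x, orbMk G x = y := Quotient.exists_rep y
    obtain ⟨U, hUo, hxU, hUp, hUs⟩ := hloc x₀
    refine ⟨orbMk G '' U, orbMk_open _ hUo, ⟨_, hxU, rfl⟩, ?_⟩
    intro a b p hp x hx
    obtain ⟨u, hu, hua⟩ : a ∈ orbMk G '' U := by simpa using hp 0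
    obtain ⟨w, hw, hwb⟩ : b ∈ orbMk G '' U := by simpa using hp 1
    obtain ⟨g, hg⟩ := orbMk_eq (hx.symm.trans hua.symm)
    obtain ⟨γ, hγ⟩ := hUp.joinedIn u hu w hw
    have hb : b = orbMk G (g • w) := by rw [orbMk_smul, hwb]
    refine ⟨g • w, hb, (gpath g γ).cast hg.symm rfl, ?_⟩
    rw [qpath_cast, qpath_gpath]
    refine homotopic_of_mem hUs ⟨Subtype.val, continuous_subtype_val⟩ (ContinuousMap.id _) _ _ hp
      ?_ (fun _ _ => rfl)
    intro t
    exact ⟨γ t, hγ t, rfl⟩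

theorem orbit_simplyConnected [SimplyConnectedSpace X]
    (hloc : ∀ x : X, ∃ U : Set X, IsOpen U ∧ x ∈ U ∧ IsPathConnected U ∧
      IsSimplyConnected (orbMk G '' U))
    (hgen : Subgroup.closure {g : G | ∃ x : X, g • x = x} = ⊤) :
    SimplyConnectedSpace (OrbSp G X) := by
  rw [simply_connected_iff_loops_nullhomotopic]
  constructor
  · infer_instance
  intro a p
  obtain ⟨x, hx⟩ : ∃ x, orbMk G x = a := Quotient.exists_rep a
  have hg' : ∀ g : G, a = orbMk G (g • x) := fun g => by rw [orbMk_smul, hx]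
  have key : ∀ g : G, ∃ γ : Path x (g • x),
      (qpath G γ hx.symm (hg' g)).Homotopic (Path.refl a) := by
    intro g
    have hg : g ∈ Subgroup.closure {g : G | ∃ x : X, g • x = x} := by rw [hgen]; trivial
    induction hg using Subgroup.closure_induction with
    | mem g hg =>
      obtain ⟨v, hv⟩ := hg
      let α := PathConnectedSpace.somePath x v
      refine ⟨α.trans ((gpath g α).symm.cast hv.symm rfl), ?_⟩
      rw [qpath_trans _ _ hx.symm (rfl : orbMk G v = _), qpath_cast, qpath_symm, qpath_gpath]
      exact ⟨(Path.Homotopy.reflTransSymm _).symm⟩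
    | one =>
      refine ⟨(Path.refl x).cast rfl (one_smul _ _), ?_⟩
      subst hx
      exact Path.Homotopic.refl _
    | mul g h _ _ ihg ihh =>
      obtain ⟨α, hα⟩ := ihg
      obtain ⟨β, hβ⟩ := ihh
      refine ⟨α.trans ((gpath g β).cast rfl (mul_smul _ _ _)), ?_⟩
      rw [qpath_trans _ _ hx.symm (hg' g), qpath_cast, qpath_gpath]
      exact (hα.hcomp hβ).trans ⟨Path.Homotopy.reflTrans _⟩
    | inv g _ ih =>
      obtain ⟨α, hα⟩ := ih
      refine ⟨(gpath g⁻¹ α).symm.cast (inv_smul_smul g x).symm rfl, ?_⟩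
      rw [qpath_cast, qpath_symm, qpath_gpath]
      simpa using hα.symm₂
  obtain ⟨y, hy, γ, hγ⟩ := exists_lift_up_to_homotopy hloc p x hx.symm
  obtain ⟨g, rfl⟩ := orbMk_eq (hy.symm.trans hx.symm)
  obtain ⟨γ', hγ'⟩ := key g
  exact (hγ.trans (qpath_homotopic (SimplyConnectedSpace.paths_homotopic γ γ') _ _)).trans
    (hγ'.trans (Path.Homotopic.refl _))

/-- An equivariantly contractible slice has contractible image in the quotient. -/
theorem image_simplyConnected (U : Set X) (hU : IsOpen U) (x : X) (hx : x ∈ U)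
    (c : C(unitInterval × U, U)) (h0 : ∀ u, c (0, u) = u) (h1 : ∀ u, c (1, u) = ⟨x, hx⟩)
    (heq : ∀ (g : G) (u v : U), g • (u : X) = v → ∀ t, g • (c (t, u) : X) = c (t, v)) :
    IsSimplyConnected (orbMk G '' U) := by
  let f : U → (orbMk G '' U : Set (OrbSp G X)) := fun u => ⟨orbMk G u, u, u.2, rfl⟩
  have hfc : Continuous f := by fun_prop
  have hfo : IsOpenMap f := by
    have : IsOpenMap (fun u : U => orbMk G (u : X)) := orbMk_open.comp hU.isOpenMap_subtype_val
    exact this.subtype_mk _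
  have hfs : Function.Surjective f := by
    rintro ⟨_, u, hu, rfl⟩; exact ⟨⟨u, hu⟩, rfl⟩
  have hq : Topology.IsQuotientMap (Prod.map (id : unitInterval → unitInterval) f) :=
    (IsOpenMap.id.prodMap hfo).isQuotientMap (by fun_prop) (Function.surjective_id.prodMap hfs)
  let F : C(unitInterval × U, (orbMk G '' U : Set (OrbSp G X))) := ⟨fun z => f (c z), by fun_prop⟩
  have hF : Function.FactorsThrough F (Prod.map (id : unitInterval → unitInterval) f) := by
    rintro ⟨t, u⟩ ⟨t', u'⟩ h
    simp only [Prod.map_apply, id, Prod.mk.injEq] at h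
    obtain ⟨rfl, h⟩ := h
    obtain ⟨g, hg⟩ := orbMk_eq (congrArg Subtype.val h)
    apply Subtype.ext
    change orbMk G (c (t, u) : X) = orbMk G (c (t, u') : X)
    rw [← heq g u' u hg t, orbMk_smul]
  let H : C(unitInterval × (orbMk G '' U : Set (OrbSp G X)), (orbMk G '' U : Set (OrbSp G X))) :=
    Topology.IsQuotientMap.lift (f := ⟨_, hq.continuous⟩) hq F hF
  have hH : ∀ t u, H (t, f u) = f (c (t, u)) := fun t u =>
    DFunLike.congr_fun (Topology.IsQuotientMap.lift_comp (f := ⟨_, hq.continuous⟩) hq F hF) (t, u)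
  have : ContractibleSpace (orbMk G '' U : Set (OrbSp G X)) := by
    rw [contractible_iff_id_nullhomotopic]
    refine ⟨f ⟨x, hx⟩, ⟨⟨H, ?_, ?_⟩⟩⟩
    · intro y
      obtain ⟨u, rfl⟩ := hfs y
      change H (0, f u) = f u
      rw [hH, h0]
    · intro y
      obtain ⟨u, rfl⟩ := hfs y
      change H (1, f u) = _
      rw [hH, h1]; rfl
  exact SimplyConnectedSpace.ofContractible _
end quotient

section final

theorem orth_smul_coe {n : ℕ} (G : Subgroup (Orth n)) (g : G) (x : sphere (0 : Euc n) 1) :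
    ((g • x : sphere (0 : Euc n) 1) : Euc n) = (g : Orth n) (x : Euc n) := rfl

theorem orth_continuous {n : ℕ} (G : Subgroup (Orth n)) :
    ContinuousConstSMul G (sphere (0 : Euc n) 1) :=
  ⟨fun g => Continuous.subtype_mk
    ((g : Orth n).continuous.comp continuous_subtype_val) _⟩

/-- The open Dirichlet cone of a point. -/
def dcone {n : ℕ} (G : Subgroup (Orth n)) (x : Euc n) : Set (Euc n) :=
  {v | 0 < inner ℝ x v ∧ ∀ g : G, (g : Orth n) x ≠ x → inner ℝ ((g : Orth n) x) v < inner ℝ x v}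

theorem dcone_convex {n : ℕ} (G : Subgroup (Orth n)) (x : Euc n) : Convex ℝ (dcone G x) := by
  have h : dcone G x = {v | 0 < inner ℝ x v} ∩ ⋂ g : G, {v | (g : Orth n) x ≠ x →
      0 < inner ℝ (x - (g : Orth n) x) v} := by
    ext v
    simp [dcone, inner_sub_left]
  have hc : ∀ y : Euc n, Convex ℝ {v | 0 < inner ℝ y v} := by
    intro y v hv w hw α β hα hβ hαβ
    simp only [Set.mem_ofPred_eq, inner_add_right, inner_smul_right] at *
    rcases hα.eq_or_lt with rfl | hα
    · simp at hαβ; subst hαβ; simpa using hw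
    · positivity
  rw [h]
  refine (hc x).inter (convex_iInter fun g => ?_)
  by_cases hg : (g : Orth n) x = x
  · simpa [hg] using convex_univ
  · simpa [hg] using hc (x - (g : Orth n) x)

theorem dcone_cone {n : ℕ} (G : Subgroup (Orth n)) (x : Euc n) (c : ℝ) (hc : 0 < c)
    (v : Euc n) (hv : v ∈ dcone G x) : c • v ∈ dcone G x := by
  refine ⟨?_, fun g hg => ?_⟩
  · rw [inner_smul_right]
    exact mul_pos hc hv.1
  · rw [inner_smul_right, inner_smul_right]
    exact mul_lt_mul_of_pos_left (hv.2 g hg) hc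

theorem dcone_open {n : ℕ} (G : Subgroup (Orth n)) [Finite G] (x : Euc n) :
    IsOpen (dcone G x) := by
  have h : dcone G x = {v | 0 < inner ℝ x v} ∩ ⋂ g : G, {v | (g : Orth n) x ≠ x →
      inner ℝ ((g : Orth n) x) v < inner ℝ x v} := by
    ext v
    simp [dcone]
  rw [h]
  refine (isOpen_lt continuous_const (by fun_prop)).inter (isOpen_iInter_of_finite fun g => ?_)
  by_cases hg : (g : Orth n) x = x
  · simp [hg]
  · simpa [hg] using isOpen_lt (f := fun v : Euc n => inner ℝ ((g : Orth n) x) v)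
      (g := fun v => inner ℝ x v) (by fun_prop) (by fun_prop)

theorem dcone_zero {n : ℕ} (G : Subgroup (Orth n)) (x : Euc n) : (0 : Euc n) ∉ dcone G x := by
  intro h
  simpa using h.1

theorem dcone_self {n : ℕ} (G : Subgroup (Orth n)) (x : Euc n) (hx : ‖x‖ = 1) :
    x ∈ dcone G x := by
  refine ⟨by simp [hx], fun g hg => ?_⟩
  rw [real_inner_self_eq_norm_sq, hx, one_pow]
  exact (inner_lt_one_iff_real_of_norm_eq_one (by simp [hx]) hx).2 hg

theorem dcone_fix {n : ℕ} (G : Subgroup (Orth n)) (x : Euc n) (g : G) (u : Euc n)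
    (hu : u ∈ dcone G x) (hgu : (g : Orth n) u ∈ dcone G x) : (g : Orth n) x = x := by
  by_contra hg
  have h1 := hgu.2 g hg
  rw [LinearIsometryEquiv.inner_map_map] at h1
  have h3 : inner ℝ (((g⁻¹ : G) : Orth n) x) u = inner ℝ x ((g : Orth n) u) := by
    rw [← LinearIsometryEquiv.inner_map_map (g : Orth n)]
    congr 1
    change ((g : Orth n) * ((g : Orth n)⁻¹)) x = x
    rw [mul_inv_cancel]; rfl
  have h2 := hu.2 g⁻¹ (fun h => hg (by
    nth_rewrite 1 [← h]
    change ((g : Orth n) * ((g : Orth n)⁻¹)) x = x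
    rw [mul_inv_cancel]; rfl))
  linarith

theorem orth_local {n : ℕ} (G : Subgroup (Orth n)) [Finite G] (x : sphere (0 : Euc n) 1) :
    ∃ U : Set (sphere (0 : Euc n) 1), IsOpen U ∧ x ∈ U ∧ IsPathConnected U ∧
      IsSimplyConnected (orbMk G '' U) := by
  have := orth_continuous G
  have hx : (x : Euc n) ∈ dcone G (x : Euc n) := dcone_self G _ (by simp)
  have h0 := dcone_zero G (x : Euc n)
  have hconv := dcone_convex G (x : Euc n)
  have hxU : x ∈ (Subtype.val ⁻¹' dcone G (x : Euc n) : Set (sphere (0 : Euc n) 1)) := hx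
  have hUo : IsOpen (Subtype.val ⁻¹' dcone G (x : Euc n) : Set (sphere (0 : Euc n) 1)) :=
    (dcone_open G _).preimage continuous_subtype_val
  refine ⟨Subtype.val ⁻¹' dcone G (x : Euc n), hUo, hxU, ⟨x, hxU, ?_⟩, ?_⟩
  · intro y hy
    obtain ⟨p, hp, -⟩ := exists_segment_path hconv h0 (dcone_cone G _) x y hx hy
    exact ⟨p, hp⟩
  let U := (Subtype.val ⁻¹' dcone G (x : Euc n) : Set (sphere (0 : Euc n) 1))
  have hmem : ∀ z : unitInterval × U, (1 - z.1 : ℝ) • (z.2 : Euc n) + (z.1 : ℝ) • (x : Euc n) ∈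
      dcone G (x : Euc n) := fun z =>
    hconv z.2.2 hx (by linarith [z.1.2.2]) z.1.2.1 (by ring)
  let f : C(unitInterval × U, dcone G (x : Euc n)) := ⟨fun z => ⟨_, hmem z⟩, by fun_prop⟩
  let c : C(unitInterval × U, U) := ⟨fun z => ⟨radial _ h0 (f z), by
    apply dcone_cone G _ _ _ _ (hmem z)
    simp only [inv_pos, norm_pos_iff]
    intro h
    exact h0 (by have h5 := hmem z; change (1 - z.1 : ℝ) • (z.2 : Euc n) + (z.1 : ℝ) • (x : Euc n) = 0 at h; rwa [h] at h5)⟩, by fun_prop⟩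
  refine image_simplyConnected U hUo x hxU c ?_ ?_ ?_
  · intro u
    apply Subtype.ext
    apply Subtype.ext
    simp [c, f, radial]
  · intro u
    apply Subtype.ext
    apply Subtype.ext
    simp [c, f, radial]
  · intro g u v huv t
    have huv' : (g : Orth n) (u : Euc n) = (v : Euc n) := congrArg Subtype.val huv
    have hgx : (g : Orth n) (x : Euc n) = x := dcone_fix G _ g u u.2 (by rw [huv']; exact v.2)
    apply Subtype.ext
    have h1 : (g : Orth n) ((1 - t : ℝ) • (u : Euc n) + (t : ℝ) • (x : Euc n)) =
        (1 - t : ℝ) • (v : Euc n) + (t : ℝ) • (x : Euc n) := by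
      rw [map_add, map_smul, map_smul, huv', hgx]
    rw [orth_smul_coe]
    change (g : Orth n) (‖(1 - t : ℝ) • (u : Euc n) + (t : ℝ) • (x : Euc n)‖⁻¹ •
      ((1 - t : ℝ) • (u : Euc n) + (t : ℝ) • (x : Euc n))) =
      ‖(1 - t : ℝ) • (v : Euc n) + (t : ℝ) • (x : Euc n)‖⁻¹ •
      ((1 - t : ℝ) • (v : Euc n) + (t : ℝ) • (x : Euc n))
    rw [map_smul, h1, ← h1, LinearIsometryEquiv.norm_map]

end final

/-- If `n ≥ 3` and `G ≤ SO(n)` is a finite subgroup generated by elements each of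
which has a nonzero fixed vector, then `S^{n-1}/G` is simply connected. -/
theorem stmt_6 (n : ℕ) (hn : 3 ≤ n) (G : Subgroup (Orth n)) [Finite G]
    (hdet : ∀ g ∈ G, LinearMap.det ((g : Orth n).toLinearEquiv : Euc n →ₗ[ℝ] Euc n) = 1)
    (hgen : Subgroup.closure {g : Orth n | g ∈ G ∧ ∃ v : Euc n, v ≠ 0 ∧ g v = v} = G) :
    SimplyConnectedSpace (Quotient (MulAction.orbitRel G (sphere (0 : Euc n) 1))) := by
  have := orth_continuous G
  have : SimplyConnectedSpace (sphere (0 : Euc n) 1) :=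
    sphere_simplyConnected (by rw [finrank_euclideanSpace_fin]; omega)
  refine orbit_simplyConnected (G := G) (X := sphere (0 : Euc n) 1) (orth_local G) ?_
  rw [eq_top_iff]
  rintro ⟨g, hg⟩ -
  have key : ∀ g ∈ Subgroup.closure {g : Orth n | g ∈ G ∧ ∃ v : Euc n, v ≠ 0 ∧ g v = v},
      ∃ h : g ∈ G, (⟨g, h⟩ : G) ∈
        Subgroup.closure {g : G | ∃ x : sphere (0 : Euc n) 1, g • x = x} := by
    intro g hg
    induction hg using Subgroup.closure_induction with
    | mem g hg =>
      obtain ⟨h, v, hv, hgv⟩ := hg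
      refine ⟨h, Subgroup.subset_closure ⟨⟨‖v‖⁻¹ • v, by simp [norm_smul, hv]⟩, ?_⟩⟩
      apply Subtype.ext
      rw [orth_smul_coe]
      change g (‖v‖⁻¹ • v) = ‖v‖⁻¹ • v
      rw [map_smul, hgv]
    | one => exact ⟨one_mem _, one_mem _⟩
    | mul g h _ _ ihg ihh =>
      obtain ⟨h1, h2⟩ := ihg
      obtain ⟨h3, h4⟩ := ihh
      exact ⟨mul_mem h1 h3, mul_mem h2 h4⟩
    | inv g _ ih =>
      obtain ⟨h1, h2⟩ := ih
      exact ⟨inv_mem h1, inv_mem h2⟩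
  exact (key g (hgen.symm ▸ hg)).2
end
end

section
/- Let n ≥ 1, let W be a finite subgroup of O(n) generated by reflections, and let W⁺ = W ∩ SO(n) be its orientation-preserving subgroup. Then the orbit space ℝⁿ/W⁺, equipped with the quotient topology, is homeomorphic to ℝⁿ. -/
open Metric

noncomputable section

open scoped RealInnerProductSpace

/-- The orthogonal reflection in the hyperplane normal to `a`. -/
def hrefl {n : ℕ} (a : Euc n) : Orth n := (Submodule.span ℝ {a})ᗮ.reflection

/-- The determinant of an orthogonal map. -/
def odet {n : ℕ} (g : Orth n) : ℝ := LinearMap.det (g.toLinearEquiv : Euc n →ₗ[ℝ] Euc n)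

lemma odet_mul {n : ℕ} (g h : Orth n) : odet (g * h) = odet g * odet h :=
  LinearMap.det_comp _ _

lemma odet_one {n : ℕ} : odet (1 : Orth n) = 1 := LinearMap.det_id

lemma hrefl_apply {n : ℕ} {a : Euc n} (ha : ‖a‖ = 1) (x : Euc n) :
    hrefl a x = x - (2 * ⟪a, x⟫) • a := by
  rw [hrefl, Submodule.reflection_orthogonal_apply, Submodule.reflection_singleton_apply, ha]
  simp [two_smul, two_mul, add_smul]

lemma odet_hrefl {n : ℕ} {a : Euc n} (ha : ‖a‖ = 1) : odet (hrefl a) = -1 := by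
  have h := Submodule.det_reflection (𝕜 := ℝ) (Submodule.span ℝ {a})ᗮ
  rw [Submodule.orthogonal_orthogonal, finrank_span_singleton (by rintro rfl; simp at ha)] at h
  exact h.trans (pow_one _)

lemma hrefl_mul_self {n : ℕ} (a : Euc n) : hrefl a * hrefl a = 1 :=
  Submodule.reflection_mul_reflection _

lemma hrefl_hrefl {n : ℕ} (a x : Euc n) : hrefl a (hrefl a x) = x :=
  Submodule.reflection_reflection _ _

lemma hrefl_neg {n : ℕ} (a : Euc n) : hrefl (-a) = hrefl a := by
  have h : Submodule.span ℝ {-a} = Submodule.span ℝ {a} := by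
    rw [← Set.neg_singleton, Submodule.span_neg]
  simp only [hrefl, h]

lemma inner_hrefl {n : ℕ} (a x y : Euc n) : ⟪hrefl a x, y⟫ = ⟪x, hrefl a y⟫ := by
  conv_lhs => rw [← hrefl_hrefl a y]
  exact (hrefl a).inner_map_map _ _

lemma hrefl_conj {n : ℕ} (g : Orth n) {a : Euc n} (ha : ‖a‖ = 1) :
    hrefl (g a) = g * hrefl a * g⁻¹ := by
  ext1 x
  have hx : x = g (g⁻¹ x) := (g.apply_symm_apply x).symm
  change _ = g (hrefl a (g⁻¹ x))
  rw [hrefl_apply (by rw [g.norm_map, ha]), hrefl_apply ha, map_sub, map_smul, ← hx]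
  conv_lhs => rw [hx, g.inner_map_map, ← hx]

lemma exists_hrefl {n : ℕ} {g : Orth n} (hg : IsReflection g) : ∃ a : Euc n, ‖a‖ = 1 ∧ g = hrefl a := by
  unfold IsReflection at hg
  have hfr := Submodule.finrank_add_finrank_orthogonal (fixedSubspace g)
  have h1 : Module.finrank ℝ (fixedSubspace g)ᗮ = 1 := by
    simp at hfr; omega
  have hmem : ∀ x, x ∈ fixedSubspace g ↔ g x = x := by
    intro x
    simp [fixedSubspace, sub_eq_zero]
  obtain ⟨v, hv0, hv⟩ := finrank_eq_one_iff'.1 h1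
  have hv0' : (v : Euc n) ≠ 0 := by simpa using hv0
  have hn : ‖(v : Euc n)‖ ≠ 0 := by simpa using hv0'
  set a : Euc n := ‖(v : Euc n)‖⁻¹ • (v : Euc n) with ha
  have hna : ‖a‖ = 1 := by
    rw [ha, norm_smul]; simp [hn]
  have haK : a ∈ (fixedSubspace g)ᗮ := Submodule.smul_mem _ _ v.2
  have hspan : (Submodule.span ℝ {a})ᗮ = fixedSubspace g := by
    rw [← Submodule.orthogonal_orthogonal (fixedSubspace g)]
    congr 1
    apply Submodule.eq_of_le_of_finrank_eq
    · simpa [Submodule.span_singleton_le_iff_mem] using haK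
    · rw [h1, finrank_span_singleton (by rintro h; simp [h] at hna)]
  have hgaK : g a ∈ (fixedSubspace g)ᗮ := by
    rw [Submodule.mem_orthogonal] at haK ⊢
    intro k hk
    rw [← (hmem k).1 hk, g.inner_map_map]
    exact haK k hk
  have hga : g a = -a := by
    obtain ⟨c, hc⟩ := hv ⟨g a, hgaK⟩
    have hc' : (c * ‖(v : Euc n)‖) • a = g a := by
      have := congrArg Subtype.val hc
      simp only [Submodule.coe_smul] at this
      rw [← this, ha, smul_smul]; congr 1; field_simp
    generalize c * ‖(v : Euc n)‖ = e at hc'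
    have he : |e| = 1 := by
      have := congrArg norm hc'
      rw [norm_smul, g.norm_map, hna] at this; simpa using this
    rcases eq_or_eq_neg_of_abs_eq he with rfl | rfl
    · exfalso
      have : a ∈ fixedSubspace g := (hmem a).2 (by rw [← hc']; simp)
      have h0 := (Submodule.mem_orthogonal _ _).1 haK a this
      rw [inner_self_eq_zero] at h0
      simp [h0] at hna
    · rw [← hc']; simp
  refine ⟨a, hna, ?_⟩
  ext1 x
  rw [hrefl_apply hna]
  have hx : x - ⟪a, x⟫ • a ∈ fixedSubspace g := by
    rw [← hspan, Submodule.mem_orthogonal_singleton_iff_inner_right]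
    simp [inner_sub_right, inner_smul_right, hna]
  rw [hmem, map_sub, map_smul, hga] at hx
  rw [two_mul, add_smul, ← sub_sub, ← hx]
  simp

/-- Unit normals of the reflections in `W`. -/
def rts {n : ℕ} (W : Subgroup (Orth n)) : Set (Euc n) := {a | ‖a‖ = 1 ∧ hrefl a ∈ W}

/-- Positive unit normals with respect to `p`. -/
def posr {n : ℕ} (W : Subgroup (Orth n)) (p : Euc n) : Set (Euc n) := {a | a ∈ rts W ∧ 0 < ⟪a, p⟫}

/-- `p` lies on no reflecting hyperplane. -/
def Reg {n : ℕ} (W : Subgroup (Orth n)) (p : Euc n) : Prop := ∀ a ∈ rts W, ⟪a, p⟫ ≠ 0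

/-- Simple positive normals. -/
def Smpl {n : ℕ} (W : Subgroup (Orth n)) (p a : Euc n) : Prop :=
  a ∈ posr W p ∧ ∀ c ∈ posr W p, c ≠ a → 0 < ⟪hrefl a c, p⟫

lemma rts_neg {n : ℕ} {W : Subgroup (Orth n)} {a : Euc n} (ha : a ∈ rts W) : -a ∈ rts W :=
  ⟨by rw [norm_neg]; exact ha.1, by rw [hrefl_neg]; exact ha.2⟩

lemma rts_map {n : ℕ} {W : Subgroup (Orth n)} {a : Euc n} (ha : a ∈ rts W) {g : Orth n}
    (hg : g ∈ W) : g a ∈ rts W :=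
  ⟨by rw [g.norm_map]; exact ha.1, by
    rw [hrefl_conj g ha.1]; exact W.mul_mem (W.mul_mem hg ha.2) (W.inv_mem hg)⟩

lemma hrefl_self {n : ℕ} {a : Euc n} (ha : ‖a‖ = 1) : hrefl a a = -a := by
  rw [hrefl_apply ha, real_inner_self_eq_norm_sq, ha, two_mul, add_smul]; simp

lemma rts_finite {n : ℕ} (W : Subgroup (Orth n)) [Finite W] : (rts W).Finite := by
  refine Set.Finite.of_finite_fibers hrefl ((Set.toFinite (W : Set (Orth n))).subset ?_) ?_
  · rintro _ ⟨a, ha, rfl⟩; exact ha.2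
  · rintro _ ⟨a, ha, rfl⟩
    refine (Set.toFinite {a, -a}).subset ?_
    rintro b ⟨hb, hba⟩
    have h1 : hrefl b a = -a := by
      rw [show hrefl b = hrefl a from hba]; exact hrefl_self ha.1
    rw [hrefl_apply hb.1] at h1
    have h2 : a = ⟪b, a⟫ • b := by
      have : (2 : ℝ) • a = (2 : ℝ) • (⟪b, a⟫ • b) := by
        rw [smul_smul, two_smul]
        rw [sub_eq_iff_eq_add] at h1
        nth_rewrite 1 [h1]
        abel
      exact smul_right_injective _ (two_ne_zero) this
    have he : |⟪b, a⟫| = 1 := by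
      have := congrArg norm h2
      rw [norm_smul, ha.1, hb.1] at this; simpa using this.symm
    rcases eq_or_eq_neg_of_abs_eq he with h | h <;> rw [h] at h2 <;> simp [h2]

lemma exists_reg {n : ℕ} (W : Subgroup (Orth n)) [Finite W] : ∃ p, Reg W p := by
  have := (rts_finite W).to_subtype
  obtain ⟨p, hp⟩ := Module.Dual.exists_forall_ne_zero_of_forall_exists
    (fun a : rts W => (innerₗ (Euc n) (a : Euc n) : Module.Dual ℝ (Euc n)))
    (fun a => ⟨a, by simpa using fun h => by simpa [h] using a.2.1⟩)
  exact ⟨p, fun a ha => hp ⟨a, ha⟩⟩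

lemma posr_finite {n : ℕ} (W : Subgroup (Orth n)) [Finite W] (p : Euc n) : (posr W p).Finite :=
  (rts_finite W).subset fun _ h => h.1

lemma inner_lt_one_of_rts {n : ℕ} {W : Subgroup (Orth n)} {a b : Euc n} (ha : a ∈ rts W)
    (hb : b ∈ rts W) (hab : a ≠ b) : ⟪a, b⟫ < 1 :=
  (inner_lt_one_iff_real_of_norm_eq_one ha.1 hb.1).2 hab

lemma exists_smpl {n : ℕ} {W : Subgroup (Orth n)} [Finite W] {p : Euc n} (hp : Reg W p)
    {x b : Euc n} (hb : b ∈ posr W p) (hbx : ⟪b, x⟫ < 0) : ∃ a, Smpl W p a ∧ ⟪a, x⟫ < 0 := by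
  obtain ⟨a, ha, hmin⟩ := Set.exists_min_image (posr W p)
    (fun b => toLex (⟪b, x⟫ / ⟪b, p⟫, ⟪b, p⟫)) (posr_finite W p) ⟨b, hb⟩
  have hrat : ∀ c ∈ posr W p, ⟪a, x⟫ * ⟪c, p⟫ ≤ ⟪c, x⟫ * ⟪a, p⟫ ∧
      (⟪a, x⟫ * ⟪c, p⟫ = ⟪c, x⟫ * ⟪a, p⟫ → ⟪a, p⟫ ≤ ⟪c, p⟫) := by
    intro c hc
    have h := hmin c hc
    have hcp := hc.2
    have hap := ha.2
    rw [Prod.Lex.toLex_le_toLex] at h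
    simp only at h
    rw [div_lt_div_iff₀ hap hcp, div_eq_div_iff hap.ne' hcp.ne'] at h
    rcases h with h | ⟨h, h'⟩
    · exact ⟨h.le, fun e => absurd e h.ne⟩
    · exact ⟨h.le, fun _ => h'⟩
  refine ⟨a, ⟨ha, fun c hc hca => ?_⟩, ?_⟩
  · by_contra hneg
    have hr : hrefl a c ∈ rts W := rts_map hc.1 ha.1.2
    have hlt : ⟪hrefl a c, p⟫ < 0 := lt_of_le_of_ne (not_lt.1 hneg) (hp _ hr)
    have hd : -hrefl a c ∈ posr W p := ⟨rts_neg hr, by rw [inner_neg_left]; linarith⟩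
    have h1 := hrat c hc
    have h2 := hrat _ hd
    have hc1 := inner_lt_one_of_rts ha.1 hc.1 hca.symm
    have hap := ha.2
    rw [hrefl_apply ha.1.1] at hlt
    simp only [hrefl_apply ha.1.1, inner_neg_left, inner_sub_left, real_inner_smul_left] at h2 hlt
    have e1 : ⟪a, x⟫ * ⟪c, p⟫ = ⟪c, x⟫ * ⟪a, p⟫ := le_antisymm h1.1 (by nlinarith [h2.1])
    have h3 := h1.2 e1
    have h4 := h2.2 (by nlinarith)
    nlinarith
  · have h := (hrat b hb).1
    have := ha.2
    have := hb.2
    by_contra hx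
    nlinarith [mul_nonneg (not_lt.1 hx) hb.2.le, mul_neg_of_neg_of_pos hbx ha.2]

/-- Words in the simple reflections. -/
inductive Word {n : ℕ} (W : Subgroup (Orth n)) (p : Euc n) : ℕ → Orth n → Prop
  | nil : Word W p 0 1
  | cons (k : ℕ) (w : Orth n) (a : Euc n) (ha : Smpl W p a) (hw : Word W p k w) :
      Word W p (k + 1) (hrefl a * w)

lemma word_mul {n : ℕ} {W : Subgroup (Orth n)} [Finite W] {p : Euc n} (hp : Reg W p)
    {b : Euc n} (hb : b ∈ posr W p) : ∀ (k : ℕ) (w : Orth n), Word W p k w →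
      ∃ k', Word W p k' (hrefl b * w) := by
  by_contra hcon
  let B : Set (Euc n) := {b | b ∈ posr W p ∧ ¬ ∀ (k : ℕ) (w : Orth n), Word W p k w →
      ∃ k', Word W p k' (hrefl b * w)}
  obtain ⟨b, hbB, hmin⟩ := Set.exists_min_image B (fun b => ⟪b, p⟫)
    ((posr_finite W p).subset fun _ h => h.1) ⟨b, hb, hcon⟩
  obtain ⟨hb, hcon⟩ := hbB
  apply hcon
  intro k w hw
  by_cases hs : Smpl W p b
  · exact ⟨_, .cons _ _ _ hs hw⟩
  obtain ⟨a, ha, hab⟩ := exists_smpl hp (x := -b) hb (by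
    rw [inner_neg_right, real_inner_self_eq_norm_sq, hb.1.1]; norm_num)
  rw [inner_neg_right] at hab
  have hne : b ≠ a := by rintro rfl; exact hs ha
  have hb' : hrefl a b ∈ posr W p := ⟨rts_map hb.1 ha.1.1.2, ha.2 b hb hne⟩
  have hlt : ⟪hrefl a b, p⟫ < ⟪b, p⟫ := by
    rw [hrefl_apply ha.1.1.1, inner_sub_left, real_inner_smul_left]
    have := ha.1.2
    nlinarith
  have hgood : ∀ (k : ℕ) (w : Orth n), Word W p k w →
      ∃ k', Word W p k' (hrefl (hrefl a b) * w) := by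
    by_contra h
    exact absurd (hmin _ ⟨hb', h⟩) (not_le.2 hlt)
  obtain ⟨k', hk'⟩ := hgood _ _ (.cons _ _ _ ha hw)
  refine ⟨k' + 1, ?_⟩
  have := Word.cons _ _ _ ha hk'
  rw [hrefl_conj _ hb.1.1] at this
  have e : hrefl a * (hrefl a * hrefl b * (hrefl a)⁻¹ * (hrefl a * w)) = hrefl b * w := by
    rw [← mul_assoc (hrefl a), ← mul_assoc (hrefl a), ← mul_assoc (hrefl a), hrefl_mul_self]
    group
  rwa [e] at this

lemma word_exchange {n : ℕ} {W : Subgroup (Orth n)} {p : Euc n} {k : ℕ}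
    {w : Orth n} (hw : Word W p k w) : ∀ b ∈ posr W p, ⟪b, w p⟫ < 0 →
      ∃ k', k' < k ∧ Word W p k' (hrefl b * w) := by
  induction hw with
  | nil => intro b hb h; exact absurd hb.2 (not_lt.2 h.le)
  | cons k w a ha hw ih =>
    intro b hb h
    have h' : ⟪hrefl a b, w p⟫ < 0 := by rw [inner_hrefl]; exact h
    by_cases hba : b = a
    · subst hba
      exact ⟨k, by omega, by rw [← mul_assoc, hrefl_mul_self, one_mul]; exact hw⟩
    · obtain ⟨k', hk', hw'⟩ := ih _ ⟨rts_map hb.1 ha.1.1.2, ha.2 b hb hba⟩ h'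
      refine ⟨k' + 1, by omega, ?_⟩
      have := Word.cons _ _ _ ha hw'
      rw [hrefl_conj _ hb.1.1] at this
      have hi : (hrefl a)⁻¹ = hrefl a := inv_eq_of_mul_eq_one_left (hrefl_mul_self a)
      have e : hrefl a * (hrefl a * hrefl b * (hrefl a)⁻¹ * w) = hrefl b * (hrefl a * w) := by
        rw [hi, ← mul_assoc (hrefl a), ← mul_assoc (hrefl a), ← mul_assoc (hrefl a),
          hrefl_mul_self, one_mul, mul_assoc]
      rwa [e] at this

lemma word_trivial {n : ℕ} {W : Subgroup (Orth n)} {p : Euc n} (k : ℕ) :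
    ∀ w : Orth n, Word W p k w → (∀ a ∈ posr W p, 0 < ⟪a, w p⟫) → w = 1 := by
  induction k using Nat.strong_induction_on with
  | _ k ih =>
    intro w hw hpos
    cases hw with
    | nil => rfl
    | cons k w a ha hw =>
      have h1 : 0 < ⟪hrefl a a, w p⟫ := by rw [inner_hrefl]; exact hpos a ha.1
      rw [hrefl_self ha.1.1.1, inner_neg_left] at h1
      obtain ⟨k', hk', hw'⟩ := word_exchange hw a ha.1 (by linarith)
      exact ih k' (by omega) _ hw' hpos

/-- The hypothesis that `W` is generated by its reflections. -/
def RGen {n : ℕ} (W : Subgroup (Orth n)) : Prop :=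
  Subgroup.closure {g : Orth n | g ∈ W ∧ IsReflection g} = W

lemma exists_posr_of_reflection {n : ℕ} {W : Subgroup (Orth n)} {p : Euc n} (hp : Reg W p)
    {g : Orth n} (hg : g ∈ W) (hr : IsReflection g) : ∃ a ∈ posr W p, g = hrefl a := by
  obtain ⟨a, ha, rfl⟩ := exists_hrefl hr
  have har : a ∈ rts W := ⟨ha, hg⟩
  rcases lt_or_gt_of_ne (hp a har) with h | h
  · exact ⟨-a, ⟨rts_neg har, by rw [inner_neg_left]; linarith⟩, (hrefl_neg a).symm⟩
  · exact ⟨a, ⟨har, h⟩, rfl⟩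

lemma exists_word {n : ℕ} {W : Subgroup (Orth n)} [Finite W] (hW : RGen W) {p : Euc n}
    (hp : Reg W p) {w : Orth n} (hw : w ∈ W) : ∃ k, Word W p k w := by
  rw [← hW] at hw
  induction hw using Subgroup.closure_induction_left with
  | one => exact ⟨0, .nil⟩
  | mul_left x hx y hy ih =>
    obtain ⟨a, ha, rfl⟩ := exists_posr_of_reflection hp hx.1 hx.2
    obtain ⟨k, hk⟩ := ih
    exact word_mul hp ha k y hk
  | inv_mul_cancel x hx y hy ih =>
    obtain ⟨a, ha, rfl⟩ := exists_posr_of_reflection hp hx.1 hx.2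
    obtain ⟨k, hk⟩ := ih
    rw [inv_eq_of_mul_eq_one_left (hrefl_mul_self a)]
    exact word_mul hp ha k y hk

lemma trivial_of_pos {n : ℕ} {W : Subgroup (Orth n)} [Finite W] (hW : RGen W) {p : Euc n}
    (hp : Reg W p) {w : Orth n} (hw : w ∈ W) (h : ∀ a ∈ posr W p, 0 < ⟪a, w p⟫) : w = 1 := by
  obtain ⟨k, hk⟩ := exists_word hW hp hw
  exact word_trivial k w hk h

lemma odet_sq {n : ℕ} {W : Subgroup (Orth n)} (hW : RGen W) {w : Orth n} (hw : w ∈ W) :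
    odet w = 1 ∨ odet w = -1 := by
  rw [← hW] at hw
  induction hw using Subgroup.closure_induction_left with
  | one => exact .inl odet_one
  | mul_left x hx y hy ih =>
    obtain ⟨a, ha, rfl⟩ := exists_hrefl hx.2
    rw [odet_mul, odet_hrefl ha]
    rcases ih with h | h <;> simp [h]
  | inv_mul_cancel x hx y hy ih =>
    obtain ⟨a, ha, rfl⟩ := exists_hrefl hx.2
    rw [inv_eq_of_mul_eq_one_left (hrefl_mul_self a), odet_mul, odet_hrefl ha]
    rcases ih with h | h <;> simp [h]

lemma odet_inv {n : ℕ} {W : Subgroup (Orth n)} (hW : RGen W) {w : Orth n} (hw : w ∈ W) :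
    odet w⁻¹ = odet w := by
  have h := odet_mul w w⁻¹
  rw [mul_inv_cancel, odet_one] at h
  rcases odet_sq hW hw with h1 | h1 <;> rw [h1] at h ⊢ <;> linarith

/-- The closed chamber containing `p`. -/
def Cham {n : ℕ} (W : Subgroup (Orth n)) (p : Euc n) : Set (Euc n) :=
  {x | ∀ a ∈ posr W p, 0 ≤ ⟪a, x⟫}

lemma inner_inv {n : ℕ} (w : Orth n) (x y : Euc n) : ⟪w⁻¹ x, y⟫ = ⟪x, w y⟫ := by
  rw [← w.inner_map_map]
  congr 1
  exact w.apply_symm_apply x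

lemma posr_eq {n : ℕ} {W : Subgroup (Orth n)} {p q : Euc n} (hp : Reg W p)
    (hq : ∀ a ∈ posr W p, 0 < ⟪a, q⟫) : Reg W q ∧ posr W q = posr W p := by
  have key : ∀ a ∈ rts W, (0 < ⟪a, p⟫ ∧ 0 < ⟪a, q⟫) ∨ (⟪a, p⟫ < 0 ∧ ⟪a, q⟫ < 0) := by
    intro a ha
    rcases lt_or_gt_of_ne (hp a ha) with h | h
    · right
      have := hq (-a) ⟨rts_neg ha, by rw [inner_neg_left]; linarith⟩
      rw [inner_neg_left] at this
      exact ⟨h, by linarith⟩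
    · exact .inl ⟨h, hq a ⟨ha, h⟩⟩
  refine ⟨fun a ha => ?_, ?_⟩
  · rcases key a ha with h | h
    · exact h.2.ne'
    · exact h.2.ne
  · ext a
    refine ⟨fun h => ⟨h.1, ?_⟩, fun h => ⟨h.1, hq a h⟩⟩
    rcases key a h.1 with h' | h'
    · exact h'.1
    · exact absurd h.2 (not_lt.2 h'.2.le)

lemma le_of_eps {A B a b : ℝ} (h : ∀ e : ℝ, 0 < e → A + e * a ≤ B + e * b) : A ≤ B := by
  by_contra hAB
  push Not at hAB
  have h1 : 0 < |b - a| + 1 := by positivity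
  have h2 := h ((A - B) / 2 / (|b - a| + 1)) (by apply div_pos; linarith; exact h1)
  set e := (A - B) / 2 / (|b - a| + 1)
  have he : e * (|b - a| + 1) = (A - B) / 2 := div_mul_cancel₀ _ h1.ne'
  have he0 : 0 < e := by apply div_pos; linarith; exact h1
  nlinarith [le_abs_self (b - a)]

lemma cham_le {n : ℕ} {W : Subgroup (Orth n)} [Finite W] (hW : RGen W) {p : Euc n}
    (hp : Reg W p) {x : Euc n} (hx : x ∈ Cham W p) {w : Orth n} (hw : w ∈ W) :
    ⟪x, w p⟫ ≤ ⟪x, p⟫ := by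
  -- first for interior points
  have hint : ∀ x, (∀ a ∈ posr W p, 0 < ⟪a, x⟫) → ∀ w ∈ W, ⟪x, w p⟫ ≤ ⟪x, p⟫ := by
    intro x hx w hw
    obtain ⟨v, hv, hmax⟩ := Set.exists_max_image (W : Set (Orth n)) (fun w => ⟪x, w p⟫)
      (Set.toFinite _) ⟨1, W.one_mem⟩
    have : v = 1 := by
      apply trivial_of_pos hW hp hv
      intro a ha
      by_contra hneg
      have hva : v⁻¹ a ∈ rts W := rts_map ha.1 (W.inv_mem hv)
      have h0 : ⟪a, v p⟫ ≠ 0 := by rw [← inner_inv]; exact hp _ hva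
      have hlt : ⟪a, v p⟫ < 0 := lt_of_le_of_ne (not_lt.1 hneg) h0
      have h1 := hmax (hrefl a * v) (W.mul_mem ha.1.2 hv)
      change ⟪x, hrefl a (v p)⟫ ≤ ⟪x, v p⟫ at h1
      rw [hrefl_apply ha.1.1, inner_sub_right, real_inner_smul_right, real_inner_comm a x] at h1
      have := hx a ha
      nlinarith
    have h2 := hmax w hw
    rw [this] at h2
    exact h2
  apply le_of_eps (a := ⟪p, w p⟫) (b := ⟪p, p⟫)
  intro e he
  have := hint (x + e • p) (fun a ha => by
    rw [inner_add_right, real_inner_smul_right]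
    have := mul_pos he ha.2
    have := hx a ha
    linarith) w hw
  simpa [inner_add_left, real_inner_smul_left] using this

lemma cham_le' {n : ℕ} {W : Subgroup (Orth n)} [Finite W] (hW : RGen W) {p : Euc n}
    (hp : Reg W p) {x y : Euc n} (hx : x ∈ Cham W p) (hy : y ∈ Cham W p) {w : Orth n}
    (hw : w ∈ W) : ⟪x, w y⟫ ≤ ⟪x, y⟫ := by
  apply le_of_eps (a := ⟪x, w p⟫) (b := ⟪x, p⟫)
  intro e he
  obtain ⟨h1, h2⟩ := posr_eq hp (q := y + e • p) (fun a ha => by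
    rw [inner_add_right, real_inner_smul_right]
    have := mul_pos he ha.2
    have := hy a ha
    linarith)
  have := cham_le hW h1 (x := x) (by unfold Cham; rw [h2]; exact hx) hw
  simpa [inner_add_right, real_inner_smul_right] using this

lemma cham_unique {n : ℕ} {W : Subgroup (Orth n)} [Finite W] (hW : RGen W) {p : Euc n}
    (hp : Reg W p) {x : Euc n} {w : Orth n} (hw : w ∈ W) (hx : x ∈ Cham W p)
    (hy : w x ∈ Cham W p) : w x = x := by
  have h := cham_le' hW hp hy hx hw
  have h2 := norm_sub_sq_real (w x) x
  have h3 : ⟪w x, w x⟫ = ‖x‖ ^ 2 := by rw [real_inner_self_eq_norm_sq, w.norm_map]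
  rw [w.norm_map] at h2
  have h4 : ‖w x - x‖ ^ 2 ≤ 0 := by nlinarith
  have h5 : ‖w x - x‖ = 0 := by
    have := sq_nonneg ‖w x - x‖
    exact pow_eq_zero_iff (two_ne_zero) |>.1 (le_antisymm h4 this)
  exact sub_eq_zero.1 (norm_eq_zero.1 h5)

lemma cham_stab {n : ℕ} {W : Subgroup (Orth n)} [Finite W] (hW : RGen W) {p : Euc n}
    (hp : Reg W p) {x : Euc n} {w : Orth n} (hw : w ∈ W) (hx : ∀ a ∈ posr W p, 0 < ⟪a, x⟫)
    (hy : w x = x) : w = 1 := by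
  obtain ⟨h1, h2⟩ := posr_eq hp hx
  exact trivial_of_pos hW h1 hw (fun a ha => by rw [hy]; exact ha.2)

lemma cham_exists {n : ℕ} {W : Subgroup (Orth n)} [Finite W] {p : Euc n} (x : Euc n) :
    ∃ w ∈ W, w x ∈ Cham W p := by
  obtain ⟨v, hv, hmax⟩ := Set.exists_max_image (W : Set (Orth n)) (fun w => ⟪p, w x⟫)
      (Set.toFinite _) ⟨1, W.one_mem⟩
  refine ⟨v, hv, fun a ha => ?_⟩
  by_contra hneg
  have h1 := hmax (hrefl a * v) (W.mul_mem ha.1.2 hv)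
  change ⟪p, hrefl a (v x)⟫ ≤ ⟪p, v x⟫ at h1
  rw [hrefl_apply ha.1.1, inner_sub_right, real_inner_smul_right, real_inner_comm a p] at h1
  have := ha.2
  nlinarith


lemma exists_height {n : ℕ} {W : Subgroup (Orth n)} [Finite W] {p : Euc n}
    (hne : (posr W p).Nonempty) : ∃ h : Euc n → ℝ, Continuous h ∧
      (∀ x c, h (x + c • p) = h x + c) ∧ (∀ x, x ∈ Cham W p ↔ 0 ≤ h x) ∧
      (∀ x, 0 < h x → ∀ a ∈ posr W p, 0 < ⟪a, x⟫) ∧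
      (∀ x, h x = 0 → ∃ a ∈ posr W p, ⟪a, x⟫ = 0) := by
  classical
  let S : Finset (Euc n) := (posr_finite W p).toFinset
  have hS : ∀ a, a ∈ S ↔ a ∈ posr W p := fun a => by simp [S]
  have hSne : S.Nonempty := hne.imp fun a ha => (hS a).2 ha
  let h : Euc n → ℝ := fun x => S.inf' hSne (fun a => ⟪a, x⟫ / ⟪a, p⟫)
  have hle : ∀ x c, c ≤ h x ↔ ∀ a ∈ S, c ≤ ⟪a, x⟫ / ⟪a, p⟫ := fun x c => Finset.le_inf'_iff _ _
  have hpos : ∀ a ∈ S, 0 < ⟪a, p⟫ := fun a ha => ((hS a).1 ha).2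
  refine ⟨h, ?_, ?_, ?_, ?_, ?_⟩
  · exact Continuous.finset_inf'_apply hSne (fun a _ => by fun_prop)
  · intro x c
    apply eq_of_forall_le_iff
    intro d
    rw [← sub_le_iff_le_add, hle, hle]
    refine forall₂_congr fun a ha => ?_
    rw [inner_add_right, real_inner_smul_right, add_div, mul_div_cancel_right₀ _ (hpos a ha).ne',
      sub_le_iff_le_add]
  · intro x
    rw [hle]
    refine forall_congr' fun a => ?_
    rw [hS]
    refine forall_congr' fun ha => ?_
    rw [le_div_iff₀ ha.2, zero_mul]
  · intro x hx a ha
    have h1 := (hle x (h x)).1 le_rfl a ((hS a).2 ha)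
    have h2 : 0 < ⟪a, x⟫ / ⟪a, p⟫ := lt_of_lt_of_le hx h1
    rwa [lt_div_iff₀ ha.2, zero_mul] at h2
  · intro x hx
    obtain ⟨a, ha, hax⟩ := Finset.exists_mem_eq_inf' hSne (fun a => ⟪a, x⟫ / ⟪a, p⟫)
    refine ⟨a, (hS a).1 ha, ?_⟩
    have : ⟪a, x⟫ / ⟪a, p⟫ = 0 := hax.symm.trans hx
    rcases div_eq_zero_iff.1 this with h0 | h0
    · exact h0
    · exact absurd h0 (hpos a ha).ne'

lemma main_case {n : ℕ} {W Wplus : Subgroup (Orth n)} [Finite W] (hW : RGen W)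
    (hplus : ∀ g : Orth n, g ∈ Wplus ↔ g ∈ W ∧ odet g = 1) {p : Euc n} (hp : Reg W p)
    (hne : (posr W p).Nonempty) :
    Nonempty (Quotient (MulAction.orbitRel Wplus (Euc n)) ≃ₜ Euc n) := by
  obtain ⟨h, hcont, htr, hch, hhp, hh0⟩ := exists_height hne
  obtain ⟨a0, ha0⟩ := hne
  have hp0 : ⟪p, p⟫ ≠ 0 := by
    intro h0
    rw [inner_self_eq_zero] at h0
    have := ha0.2
    simp [h0] at this
  -- the coordinate along `p`
  obtain ⟨t, htcont, htadd⟩ : ∃ t : Euc n → ℝ, Continuous t ∧ ∀ x c, t (x + c • p) = t x + c := by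
    refine ⟨fun x => ⟪p, x⟫ / ⟪p, p⟫, by fun_prop, fun x c => ?_⟩
    simp only [inner_add_right, real_inner_smul_right, add_div, mul_div_cancel_right₀ _ hp0]
  -- the signed coordinate map on a chamber
  let G : ℝ → Euc n → Euc n := fun e y => y + (e * h y - t y) • p
  have hG : ∀ (w w' : Orth n) (x : Euc n), w ∈ W → w' ∈ W → w x ∈ Cham W p → w' x ∈ Cham W p →
      G (odet w) (w x) = G (odet w') (w' x) := by
    intro w w' x hw hw' hx hx'
    have hmem : w' * w⁻¹ ∈ W := W.mul_mem hw' (W.inv_mem hw)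
    have happ : (w' * w⁻¹) (w x) = w' x := congrArg w' (w.symm_apply_apply x)
    have heq := cham_unique hW hp hmem hx (by rw [happ]; exact hx')
    rw [← happ, heq]
    rcases ((hch _).1 hx).eq_or_lt with h0 | h0
    · simp [G, ← h0]
    · have h1 := cham_stab hW hp hmem (hhp _ h0) heq
      rw [mul_inv_eq_one] at h1
      rw [h1]
  choose ω hωW hωC using fun x => cham_exists (W := W) (p := p) x
  let F : Euc n → Euc n := fun x => G (odet (ω x)) (ω x x)
  have hF : ∀ w x, w ∈ W → w x ∈ Cham W p → F x = G (odet w) (w x) := fun w x hw hx =>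
    hG _ _ _ (hωW x) hw (hωC x) hx
  have hFcont : Continuous F := by
    refine LocallyFinite.continuous (f := fun w : W => {x | (w : Orth n) x ∈ Cham W p})
      (locallyFinite_of_finite _) ?_ ?_ ?_
    · rw [Set.iUnion_eq_univ_iff]
      exact fun x => ⟨⟨ω x, hωW x⟩, hωC x⟩
    · intro w
      have : {x | (w : Orth n) x ∈ Cham W p} = {x | 0 ≤ h ((w : Orth n) x)} := by
        ext x; exact hch _
      rw [this]
      exact isClosed_le continuous_const (hcont.comp (w : Orth n).continuous)
    · intro w
      have hc : Continuous (fun x => G (odet (w : Orth n)) ((w : Orth n) x)) := by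
        have := (w : Orth n).continuous
        fun_prop
      exact hc.continuousOn.congr fun x hx => hF _ x w.2 hx
  have hGt : ∀ e y, t (G e y) = e * h y := by
    intro e y; simp only [G]; rw [htadd]; ring
  -- points of the boundary are fixed by an orientation-reversing element
  have hbd : ∀ y, h y = 0 → ∃ r ∈ W, odet r = -1 ∧ r y = y := by
    intro y hy
    obtain ⟨a, ha, hay⟩ := hh0 y hy
    exact ⟨hrefl a, ha.1.2, odet_hrefl ha.1.1, by rw [hrefl_apply ha.1.1, hay]; simp⟩
  have hrel : ∀ x y, (MulAction.orbitRel Wplus (Euc n)) x y ↔ ∃ g ∈ W, odet g = 1 ∧ g y = x := by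
    intro x y
    rw [MulAction.orbitRel_apply, MulAction.mem_orbit_iff]
    constructor
    · rintro ⟨g, hg⟩
      exact ⟨g, ((hplus g).1 g.2).1, ((hplus g).1 g.2).2, hg⟩
    · rintro ⟨g, hg, hd, hgx⟩
      exact ⟨⟨g, (hplus g).2 ⟨hg, hd⟩⟩, hgx⟩
  have hinv : ∀ x y, (MulAction.orbitRel Wplus (Euc n)) x y → F x = F y := by
    intro x y hxy
    obtain ⟨g, hg, hd, rfl⟩ := (hrel x y).1 hxy
    rw [hF (ω (g y) * g) y (W.mul_mem (hωW _) hg) (hωC (g y)), odet_mul, hd, mul_one]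
    rfl
  have hinj : ∀ x y, F x = F y → (MulAction.orbitRel Wplus (Euc n)) x y := by
    intro x y hxy
    rw [hrel]
    have hx0 := (hch _).1 (hωC x)
    have hy0 := (hch _).1 (hωC y)
    have ht := congrArg t hxy
    simp only [F, hGt] at ht
    have hxy' : ω x x + (odet (ω x) * h (ω x x) - t (ω x x)) • p =
      ω y y + (odet (ω y) * h (ω y y) - t (ω y y)) • p := hxy
    have hhe : h (ω x x) = h (ω y y) := by
      rcases odet_sq hW (hωW x) with h1 | h1 <;> rcases odet_sq hW (hωW y) with h2 | h2 <;>
        rw [h1, h2] at ht <;> linarith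
    have hte : t (ω x x) = t (ω y y) := by
      have := congrArg h hxy'
      rw [htr, htr] at this
      linarith
    have hee : ω x x = ω y y := by
      rw [ht, hte] at hxy'
      exact add_right_cancel hxy'
    have hxe : (ω x)⁻¹ (ω y y) = x := by
      rw [← hee]; exact (ω x).symm_apply_apply x
    by_cases hd : odet (ω x) = odet (ω y)
    · refine ⟨(ω x)⁻¹ * ω y, W.mul_mem (W.inv_mem (hωW x)) (hωW y), ?_, hxe⟩
      rw [odet_mul, odet_inv hW (hωW x), hd]
      rcases odet_sq hW (hωW y) with h2 | h2 <;> rw [h2] <;> norm_num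
    · have h0 : h (ω y y) = 0 := by
        rcases odet_sq hW (hωW x) with h1 | h1 <;> rcases odet_sq hW (hωW y) with h2 | h2 <;>
          rw [h1, h2] at ht hd <;> first | exact absurd rfl hd | linarith
      obtain ⟨r, hr, hrd, hry⟩ := hbd _ h0
      refine ⟨(ω x)⁻¹ * (r * ω y),
        W.mul_mem (W.inv_mem (hωW x)) (W.mul_mem hr (hωW y)), ?_, ?_⟩
      · rw [odet_mul, odet_mul, odet_inv hW (hωW x), hrd]
        rcases odet_sq hW (hωW x) with h1 | h1 <;> rcases odet_sq hW (hωW y) with h2 | h2 <;>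
          rw [h1, h2] at hd ⊢ <;> first | exact absurd rfl hd | norm_num
      · change (ω x)⁻¹ (r (ω y y)) = x
        rw [hry, hxe]
  -- the inverse
  let Y : Euc n → Euc n := fun v => v + (|t v| - h v) • p
  have hYh : ∀ v, h (Y v) = |t v| := by
    intro v; simp only [Y]; rw [htr]; ring
  have hYt : ∀ v, t (Y v) = t v + (|t v| - h v) := by
    intro v; simp only [Y]; rw [htadd]
  have hYC : ∀ v, Y v ∈ Cham W p := fun v => (hch _).2 (by rw [hYh]; positivity)
  have hYc : Continuous Y := by fun_prop
  let r0 := hrefl a0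
  have hr0 : r0 ∈ W := ha0.1.2
  have hr0d : odet r0 = -1 := odet_hrefl ha0.1.1
  let q : Euc n → Quotient (MulAction.orbitRel Wplus (Euc n)) := Quotient.mk _
  have hq : Continuous q := continuous_quotient_mk'
  classical
  let J : Euc n → Quotient (MulAction.orbitRel Wplus (Euc n)) := fun v =>
    if 0 ≤ t v then q (Y v) else q (r0 (Y v))
  have hJ : Continuous J := by
    refine Continuous.if_le (hq.comp hYc) (hq.comp (r0.continuous.comp hYc)) continuous_const
      htcont ?_
    intro v hv
    apply Quotient.sound
    apply (hrel _ _).2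
    obtain ⟨r, hr, hrd, hry⟩ := hbd (Y v) (by rw [hYh, ← hv, abs_zero])
    refine ⟨r * r0, W.mul_mem hr hr0, by rw [odet_mul, hrd, hr0d]; norm_num, ?_⟩
    change r (r0 (r0 (Y v))) = Y v
    rw [show r0 (r0 (Y v)) = Y v from hrefl_hrefl _ _, hry]
  let Fb : Quotient (MulAction.orbitRel Wplus (Euc n)) → Euc n := Quotient.lift F hinv
  have hFb : Continuous Fb := hFcont.quotient_lift hinv
  have hFbinj : Function.Injective Fb := by
    intro x y
    induction x using Quotient.inductionOn
    induction y using Quotient.inductionOn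
    intro hxy
    exact Quotient.sound (hinj _ _ hxy)
  have hFJ : ∀ v, Fb (J v) = v := by
    intro v
    have hcomp : ∀ e, e * |t v| = t v → G e (Y v) = v := by
      intro e he
      change Y v + (e * h (Y v) - t (Y v)) • p = v
      rw [hYh, hYt, he]
      change v + (|t v| - h v) • p + _ = v
      rw [add_assoc, ← add_smul]
      ring_nf
      simp
    by_cases hv : 0 ≤ t v
    · simp only [J, if_pos hv]
      change F (Y v) = v
      rw [hF 1 (Y v) W.one_mem (hYC v), odet_one]
      exact hcomp 1 (by rw [abs_of_nonneg hv, one_mul])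
    · simp only [J, if_neg hv]
      change F (r0 (Y v)) = v
      have e : r0 (r0 (Y v)) = Y v := hrefl_hrefl _ _
      rw [hF r0 (r0 (Y v)) hr0 (by rw [e]; exact hYC v), e, hr0d]
      exact hcomp (-1) (by rw [abs_of_neg (not_le.1 hv)]; ring)
  exact ⟨{ toFun := Fb
           invFun := J
           left_inv := fun x => hFbinj (hFJ _)
           right_inv := hFJ
           continuous_toFun := hFb
           continuous_invFun := hJ }⟩

/-- If `W ≤ O(n)` (`n ≥ 1`) is a finite reflection group and `W⁺ = W ∩ SO(n)` is
its orientation-preserving subgroup, then `ℝⁿ/W⁺` with the quotient topology is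
homeomorphic to `ℝⁿ`. -/
theorem stmt_19 (n : ℕ) (hn : 1 ≤ n) (W Wplus : Subgroup (Orth n)) [Finite W]
    (hgen : Subgroup.closure {g : Orth n | g ∈ W ∧ IsReflection g} = W)
    (hplus : ∀ g : Orth n, g ∈ Wplus ↔ g ∈ W ∧
      LinearMap.det (g.toLinearEquiv : Euc n →ₗ[ℝ] Euc n) = 1) :
    Nonempty (Quotient (MulAction.orbitRel Wplus (Euc n)) ≃ₜ Euc n) := by
  have hplus' : ∀ g : Orth n, g ∈ Wplus ↔ g ∈ W ∧ odet g = 1 := hplus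
  have hW : RGen W := hgen
  obtain ⟨p, hp⟩ := exists_reg W
  by_cases hne : (posr W p).Nonempty
  · exact main_case hW hplus' hp hne
  -- no reflections: the group is trivial
  have htriv : ∀ g ∈ W, g = 1 := by
    intro g hg
    exact trivial_of_pos hW hp hg fun a ha => absurd ⟨a, ha⟩ hne
  have hrel : ∀ x y, (MulAction.orbitRel Wplus (Euc n)) x y → x = y := by
    intro x y hxy
    rw [MulAction.orbitRel_apply, MulAction.mem_orbit_iff] at hxy
    obtain ⟨g, hg⟩ := hxy
    have h1 : (g : Orth n) = 1 := htriv _ ((hplus g).1 g.2).1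
    have h2 : (g : Orth n) y = x := hg
    rw [h1] at h2
    exact h2.symm
  exact ⟨{ toFun := Quotient.lift id hrel
           invFun := Quotient.mk _
           left_inv := fun x => by
             induction x using Quotient.inductionOn
             rfl
           right_inv := fun _ => rfl
           continuous_toFun := continuous_id.quotient_lift hrel
           continuous_invFun := continuous_quotient_mk' }⟩
end
end
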